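/- Sample-path monotonicity of the Kalman correction term under loss of measurements: Let X be an n×n positive definite real matrix, A any n×n real matrix, C an M×n real matrix with rows C_1,…,C_M, and R = diag(r_1,…,r_M) a diagonal matrix with r_i > 0. Let D be the M×n matrix obtained from C by replacing the rows with indices outside some subset I ⊆ {1,…,M} with zero rows (i.e., the i-th row of D is C_i if i ∈ I and 0 otherwise). Then A X C^T (C X C^T + R)^{−1} C X A^T − A X D^T (D X D^T + R)^{−1} D X A^T is positive semidefinite. -/

import Mathlib

open Matrix

/-!
Dropping sensors is a lossy processing `y ↦ P y` of the measurement, and no processing `P` improves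
the correction: if `P S Pᴴ ≤ T`, where `S` and `T` are the innovation covariances before and after,
then `Pᴴ T⁻¹ P ≤ S⁻¹`. Indeed `T - P S Pᴴ` and `S⁻¹ - Pᴴ T⁻¹ P` are the two Schur complements of the
block matrix with rows `(S⁻¹, Pᴴ)` and `(P, T)`. Since `S` and `T` contain the same signal part
after processing, `P S Pᴴ ≤ T` only compares noise covariances, which is immediate when `P` and the
noise covariance are diagonal.
-/

theorem posSemidef_diagonal_sub_indicator_mul_diagonal_mul {α m : Type*}
    [Ring α] [PartialOrder α] [StarRing α] [StarOrderedRing α] [Fintype m] [DecidableEq m]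
    {r : m → α} (hr : ∀ i, 0 ≤ r i) (I : Finset m) :
    (diagonal r - diagonal (fun i ↦ if i ∈ I then 1 else 0) * diagonal r *
      (diagonal fun i ↦ if i ∈ I then 1 else 0)ᴴ).PosSemidef := by
  rw [diagonal_conjTranspose, diagonal_mul_diagonal, diagonal_mul_diagonal, diagonal_sub,
    posSemidef_diagonal_iff]
  intro i
  by_cases hi : i ∈ I <;> simp [hi, hr i]

section

variable {K k l m n : Type*} [Field K] [PartialOrder K] [StarRing K] [StarOrderedRing K]
  [Fintype k] [DecidableEq k] [Fintype m] [DecidableEq m] [Fintype n]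

theorem posSemidef_inv_sub_conjTranspose_mul_inv_mul_iff {S : Matrix m m K} {T : Matrix k k K}
    (hS : S.PosDef) (hT : T.PosDef) (P : Matrix k m K) :
    (S⁻¹ - Pᴴ * T⁻¹ * P).PosSemidef ↔ (T - P * S * Pᴴ).PosSemidef := by
  let _ := hS.isUnit.invertible
  let _ := hT.isUnit.invertible
  have schur_T := PosDef.fromBlocks₂₂ S⁻¹ Pᴴ hT
  have schur_S := PosDef.fromBlocks₁₁ Pᴴ T hS.inv
  rw [conjTranspose_conjTranspose] at schur_T schur_S
  rw [inv_inv_of_invertible] at schur_S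
  exact schur_T.symm.trans schur_S

/-- The correction term subtracted from the predicted covariance in the Kalman filter, for prior
covariance `X`, dynamics `A`, measurement matrix `C` and noise covariance `R`. The inverse has its
intended meaning when `C * X * Cᴴ + R` is invertible, for instance when `X` is positive semidefinite
and `R` positive definite. -/
noncomputable def kalmanCorrection (A : Matrix l n K) (X : Matrix n n K) (C : Matrix m n K)
    (R : Matrix m m K) : Matrix l l K :=
  A * X * Cᴴ * (C * X * Cᴴ + R)⁻¹ * C * X * Aᴴ

theorem posSemidef_kalmanCorrection_sub_kalmanCorrection_mul [Finite l]
    {X : Matrix n n K} (hX : X.PosSemidef) {R : Matrix m m K} (hR : R.PosDef)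
    {Q : Matrix k k K} (hQ : Q.PosDef) {P : Matrix k m K} (hP : (Q - P * R * Pᴴ).PosSemidef)
    (A : Matrix l n K) (C : Matrix m n K) :
    (kalmanCorrection A X C R - kalmanCorrection A X (P * C) Q).PosSemidef := by
  set S := C * X * Cᴴ + R with hS
  set T := P * C * X * (P * C)ᴴ + Q with hT
  have noise_gap : T - P * S * Pᴴ = Q - P * R * Pᴴ := by
    simp only [hS, hT, conjTranspose_mul, Matrix.mul_add, Matrix.add_mul, Matrix.mul_assoc]
    abel
  have posDef_S : S.PosDef := .posSemidef_add (hX.mul_mul_conjTranspose_same C) hR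
  have posDef_T : T.PosDef := .posSemidef_add (hX.mul_mul_conjTranspose_same (P * C)) hQ
  have inv_gap : (S⁻¹ - Pᴴ * T⁻¹ * P).PosSemidef :=
    (posSemidef_inv_sub_conjTranspose_mul_inv_mul_iff posDef_S posDef_T P).2 (noise_gap ▸ hP)
  have correction_gap : kalmanCorrection A X C R - kalmanCorrection A X (P * C) Q =
      A * X * Cᴴ * (S⁻¹ - Pᴴ * T⁻¹ * P) * (A * X * Cᴴ)ᴴ := by
    rw [kalmanCorrection, kalmanCorrection, ← hS, ← hT]
    simp only [conjTranspose_mul, conjTranspose_conjTranspose, hX.isHermitian.eq, Matrix.mul_sub,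
      Matrix.sub_mul, Matrix.mul_assoc]
  exact correction_gap ▸ inv_gap.mul_mul_conjTranspose_same (A * X * Cᴴ)

theorem kalman_correction_monotone_under_row_zeroing_general [Finite l]
    {X : Matrix n n K} (hX : X.PosSemidef) (A : Matrix l n K) (C : Matrix m n K)
    {r : m → K} (hr : ∀ i, 0 < r i) (I : Finset m) {D : Matrix m n K}
    (hD : ∀ i j, D i j = if i ∈ I then C i j else 0) :
    (kalmanCorrection A X C (diagonal r) - kalmanCorrection A X D (diagonal r)).PosSemidef := by
  have hDC : D = diagonal (fun i ↦ if i ∈ I then (1 : K) else 0) * C := by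
    ext i j
    rw [hD, diagonal_mul, ite_mul, one_mul, zero_mul]
  rw [hDC]
  exact posSemidef_kalmanCorrection_sub_kalmanCorrection_mul hX (.diagonal hr) (.diagonal hr)
    (posSemidef_diagonal_sub_indicator_mul_diagonal_mul (fun i ↦ (hr i).le) I) A C

end

/-- Sample-path monotonicity of the Kalman correction term under loss of measurements
(inequality (14)): zeroing out the rows of `C` outside `I` cannot increase the
correction term `A X Cᵀ (C X Cᵀ + R)⁻¹ C X Aᵀ` in the Loewner order. -/
theorem kalman_correction_monotone_under_row_zeroing
    (n M : ℕ)
    (X : Matrix (Fin n) (Fin n) ℝ) (hX : X.PosDef)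
    (A : Matrix (Fin n) (Fin n) ℝ)
    (C : Matrix (Fin M) (Fin n) ℝ)
    (r : Fin M → ℝ) (hr : ∀ i, 0 < r i)
    (I : Finset (Fin M))
    (D : Matrix (Fin M) (Fin n) ℝ)
    (hD : ∀ i j, D i j = if i ∈ I then C i j else 0) :
    (A * X * Cᵀ * (C * X * Cᵀ + Matrix.diagonal r)⁻¹ * C * X * Aᵀ -
      A * X * Dᵀ * (D * X * Dᵀ + Matrix.diagonal r)⁻¹ * D * X * Aᵀ).PosSemidef := by
  simpa only [kalmanCorrection, conjTranspose_eq_transpose_of_trivial] using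
    kalman_correction_monotone_under_row_zeroing_general hX.posSemidef A C hr I hD
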